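/- Let δ ≥ 7 be an integer, let 𝐮 be the standard sequence over {a, b} whose slope has continued fraction expansion θ = [0, 1, ⌊δ/2⌋, 1, 1, 1, …] (partial quotients a₁ = 1, a₂ = ⌊δ/2⌋, and aₙ = 1 for all n ≥ 3), and let 𝐱_{2δ} = colour(𝐮, (12⋯δ)^ω, (1′2′⋯δ′)^ω). If w is a bispecial factor of 𝐱_{2δ} such that π(w) contains both a and b, then |w|/|v| < 1/(2δ−2) for every return word v to w in 𝐱_{2δ}. -/

import Mathlib

open Filter
open scoped ENNReal

namespace BalancedCE

variable {α : Type*} {β : Type*}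

/-- The factor of `v` of length `n` starting at position `i`. -/
def factorAt (v : ℕ → α) (i n : ℕ) : List α := (List.range n).map fun k => v (i + k)

/-- `u` is a factor of the sequence `v`. -/
def IsFactor (v : ℕ → α) (u : List α) : Prop := ∃ i, factorAt v i u.length = u

/-- The word `w` occurs in the sequence `v` at position `i`. -/
def OccursAt (v : ℕ → α) (w : List α) (i : ℕ) : Prop := factorAt v i w.length = w

/-- A sequence is balanced if counts of each letter in equal-length factors differ by at most 1. -/
def Balanced [DecidableEq α] (v : ℕ → α) : Prop :=
  ∀ (a : α) (u w : List α), IsFactor v u → IsFactor v w → u.length = w.length →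
    |(u.count a : ℤ) - (w.count a : ℤ)| ≤ 1

def EventuallyPeriodic (v : ℕ → α) : Prop :=
  ∃ p, 0 < p ∧ ∃ N, ∀ n, N ≤ n → v (n + p) = v n

def Recurrent (v : ℕ → α) : Prop :=
  ∀ u : List α, IsFactor v u → ∀ N : ℕ, ∃ i, N ≤ i ∧ OccursAt v u i

/-- `i < j` are consecutive occurrences of the letter `a` in `v`. -/
def ConsecOcc (v : ℕ → α) (a : α) (i j : ℕ) : Prop :=
  i < j ∧ v i = a ∧ v j = a ∧ ∀ k, i < k → k < j → v k ≠ a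

/-- `p` is a period of the finite word `z` (i.e. `z` is a prefix of `u^ω` with `|u| = p`). -/
def IsPeriod (z : List α) (p : ℕ) : Prop :=
  0 < p ∧ ∀ i, i + p < z.length → z[i]? = z[i + p]?

/-- The minimal period of a finite word. -/
noncomputable def minPeriod (z : List α) : ℕ := sInf {p | IsPeriod z p}

/-- The exponent of a finite word: its length divided by its minimal period. -/
noncomputable def expE (z : List α) : ℝ≥0∞ := (z.length : ℝ≥0∞) / (minPeriod z : ℝ≥0∞)

/-- The critical exponent of a sequence: the supremum of exponents of nonempty factors. -/
noncomputable def criticalExponent (v : ℕ → α) : ℝ≥0∞ :=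
  ⨆ (z : List α) (_ : IsFactor v z ∧ z ≠ []), expE z

/-- A Pansiot sequence over a `d`-letter alphabet. -/
def Pansiot (d : ℕ) (v : ℕ → α) : Prop :=
  (∀ i : ℕ, (factorAt v i (d - 1)).Nodup) ∧
  ∀ (a : α) (i j : ℕ), ConsecOcc v a i j → v (i + 1) ≠ v (j + 1)

/-- The letter `a` has frequency `ρ` in the sequence `v`. -/
def HasFreq [DecidableEq α] (v : ℕ → α) (a : α) (ρ : ℝ) : Prop :=
  Tendsto (fun n => ((factorAt v 0 n).count a : ℝ) / n) atTop (nhds ρ)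

/-- Factor complexity of a sequence. -/
noncomputable def complexity (v : ℕ → α) (n : ℕ) : ℕ :=
  Set.ncard {u : List α | IsFactor v u ∧ u.length = n}

/-- Sturmian sequences: aperiodic binary sequences of factor complexity `n + 1`.
Convention: the letter `a` is `false`, the letter `b` is `true`. -/
def Sturmian (u : ℕ → Bool) : Prop :=
  ¬ EventuallyPeriodic u ∧ ∀ n, complexity u n = n + 1

/-- Prepending a letter to a sequence. -/
def consSeq (c : α) (v : ℕ → α) : ℕ → α := fun n =>
  match n with
  | 0 => c
  | Nat.succ m => v m

/-- A standard sequence: a Sturmian sequence `u` such that `a·u` and `b·u` are Sturmian. -/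
def IsStandard (u : ℕ → Bool) : Prop :=
  Sturmian u ∧ Sturmian (consSeq false u) ∧ Sturmian (consSeq true u)

/-- The slope of a binary sequence, with the convention `ρ_b > ρ_a` (`a = false`, `b = true`). -/
def HasSlope (u : ℕ → Bool) (θ : ℝ) : Prop :=
  ∃ ρa ρb : ℝ, HasFreq u false ρa ∧ HasFreq u true ρb ∧ ρa < ρb ∧ θ = ρa / ρb

/-- `θ` has the (infinite) continued fraction expansion `[0; a 1, a 2, a 3, …]`:
there are complete quotients' fractional parts `t n ∈ (0,1)` with `t 0 = θ` and
`1 / t n = a (n+1) + t (n+1)` for all `n`. (The value `a 0` is irrelevant.) -/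
def HasCF (θ : ℝ) (a : ℕ → ℕ) : Prop :=
  ∃ t : ℕ → ℝ, t 0 = θ ∧ ∀ n, 0 < t n ∧ t n < 1 ∧ 1 / t n = (a (n + 1) : ℝ) + t (n + 1)

/-- Number of positions `< n` where `u` takes the value `c`. -/
def countBefore (u : ℕ → Bool) (c : Bool) (n : ℕ) : ℕ :=
  ((List.range n).filter fun i => u i = c).length

/-- The colouring of a binary sequence `u` by `y` (on the `a = false` positions)
and `y'` (on the `b = true` positions). -/
def colour (u : ℕ → Bool) (y : ℕ → α) (y' : ℕ → β) : ℕ → α ⊕ β := fun n =>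
  if u n = false then Sum.inl (y (countBefore u false n))
  else Sum.inr (y' (countBefore u true n))

/-- A constant gap sequence: periodic, and consecutive occurrences of each occurring
letter are at a constant distance. -/
def ConstantGap (y : ℕ → α) : Prop :=
  (∃ p, 0 < p ∧ ∀ n, y (n + p) = y n) ∧
  ∀ c : α, (∃ i, y i = c) → ∃ g, 0 < g ∧ ∀ i j, ConsecOcc y c i j → j - i = g

/-- The discolouration (projection) map: letters of the first alphabet go to `a = false`,
letters of the second alphabet go to `b = true`. -/
def proj : α ⊕ β → Bool := Sum.elim (fun _ => false) (fun _ => true)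

/-- `v` is a return word to `w` in the sequence `z`. -/
def IsReturnWord (z : ℕ → α) (w v : List α) : Prop :=
  ∃ i j : ℕ, i < j ∧ OccursAt z w i ∧ OccursAt z w j ∧
    (∀ k, i < k → k < j → ¬ OccursAt z w k) ∧ v = factorAt z i (j - i)

def RightSpecial (z : ℕ → α) (w : List α) : Prop :=
  ∃ a b : α, a ≠ b ∧ IsFactor z (w ++ [a]) ∧ IsFactor z (w ++ [b])

def LeftSpecial (z : ℕ → α) (w : List α) : Prop :=
  ∃ a b : α, a ≠ b ∧ IsFactor z (a :: w) ∧ IsFactor z (b :: w)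

def Bispecial (z : ℕ → α) (w : List α) : Prop := LeftSpecial z w ∧ RightSpecial z w

/-- `o` enumerates, in increasing order, all occurrences of `w` in `z`. -/
def IsOccEnum (z : ℕ → α) (w : List α) (o : ℕ → ℕ) : Prop :=
  StrictMono o ∧ (∀ n, OccursAt z w (o n)) ∧ ∀ i, OccursAt z w i → ∃ n, o n = i

/-- The derived sequence of `z` with respect to the occurrence enumeration `o` of a factor:
its `n`-th letter is the return word between the `n`-th and `(n+1)`-st occurrences. -/
def derivedSeq (z : ℕ → α) (o : ℕ → ℕ) : ℕ → List α :=
  fun n => factorAt z (o n) (o (n + 1) - o n)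

/-- The slope of a sequence over a two-letter alphabet:
the ratio of the smaller letter frequency to the larger one. -/
def HasSlope2 {γ : Type*} [DecidableEq γ] (z : ℕ → γ) (θ : ℝ) : Prop :=
  ∃ (c c' : γ) (ρ ρ' : ℝ), c ≠ c' ∧ (∀ n, z n = c ∨ z n = c') ∧
    HasFreq z c ρ ∧ HasFreq z c' ρ' ∧ ρ < ρ' ∧ θ = ρ / ρ'

/-- The purely cyclic constant gap sequence `(0 1 ⋯ (δ-1))^ω` over `ZMod δ`. -/
def cyc (δ : ℕ) : ℕ → ZMod δ := fun n => (n : ZMod δ)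

/-- The colouring `colour(u, (1 2 ⋯ δ)^ω, (1' 2' ⋯ δ')^ω)` over `2δ` letters. -/
def colourCyc (δ : ℕ) (u : ℕ → Bool) : ℕ → ZMod δ ⊕ ZMod δ := colour u (cyc δ) (cyc δ)

/-!
Sturmian sequences are balanced, so if the letter `a` has frequency `ρ` in `u`, then the discrepancy
`D p`, the number of letters `a` among the first `p` letters of `u` minus `p * ρ`, varies by at most
`1`. If `w` contains letters of both colour classes and is left special in the colouring, then
`π w` is left special in `u`, which determines the number of letters `a` in each of its prefixes.
Comparing discrepancies along two occurrences `i < j` of `w`, one finds that `|D j - D i|` is at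
most the length of the gap around `0` left in `ℝ / ℤ` by `ρ, 2ρ, …, (n + 1)ρ`, where `n` is the
length of `w`.

On the other hand, the numbers of letters `a` and `b` between the two occurrences are multiples of
`δ`, so `j - i = δ * P` and `|D j - D i| = δ * |A - P * ρ|` for integers `P` and `A`. Hence `P * ρ`
is `δ` times closer to an integer than the gap is long, and by the law of best approximation `P` is
at least as large as a convergent denominator of `ρ` of correspondingly higher index. Since
`ρ = [0; 2, m, 1, 1, 1, …]` with `m = ⌊δ / 2⌋`, all steps between convergents after the partial
quotient `m` improve the approximation by the golden ratio only, and the factor `δ ≥ 7` gains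
enough of them to make `P ≥ 2 * n`.
-/

/-! ### Factors and right special factors -/

section Factors

variable {v : ℕ → α} {w w' : List α} {n : ℕ}

@[simp]
lemma length_factorAt (v : ℕ → α) (i n : ℕ) : (factorAt v i n).length = n := by
  simp [factorAt]

@[simp]
lemma factorAt_one (v : ℕ → α) (i : ℕ) : factorAt v i 1 = [v i] := rfl

lemma factorAt_add (v : ℕ → α) (i m n : ℕ) :
    factorAt v i (m + n) = factorAt v i m ++ factorAt v (i + m) n := by
  simp [factorAt, List.range_add, Function.comp_def, add_assoc]

lemma factorAt_succ (v : ℕ → α) (i n : ℕ) :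
    factorAt v i (n + 1) = factorAt v i n ++ [v (i + n)] :=
  factorAt_add v i n 1

lemma factorAt_succ' (v : ℕ → α) (i n : ℕ) :
    factorAt v i (n + 1) = v i :: factorAt v (i + 1) n := by
  rw [add_comm, factorAt_add, factorAt_one, List.singleton_append]

lemma factorAt_congr_iff {i j : ℕ} :
    factorAt v i n = factorAt v j n ↔ ∀ k < n, v (i + k) = v (j + k) := by
  simp [factorAt, List.map_inj_left]

lemma map_factorAt (f : α → β) (v : ℕ → α) (i n : ℕ) :
    (factorAt v i n).map f = factorAt (f ∘ v) i n := by
  simp [factorAt]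

lemma OccursAt.map {i : ℕ} (hi : OccursAt v w i) (f : α → β) : OccursAt (f ∘ v) (w.map f) i := by
  rw [OccursAt, List.length_map, ← map_factorAt, hi]

lemma isFactor_factorAt (v : ℕ → α) (i n : ℕ) : IsFactor v (factorAt v i n) :=
  ⟨i, by rw [length_factorAt]⟩

lemma occursAt_append {i : ℕ} :
    OccursAt v (w ++ w') i ↔ OccursAt v w i ∧ OccursAt v w' (i + w.length) := by
  rw [OccursAt, List.length_append, factorAt_add]
  exact ⟨fun h => List.append_inj h (length_factorAt v i _), fun ⟨h, h'⟩ => congrArg₂ _ h h'⟩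

lemma occursAt_cons {c : α} {i : ℕ} :
    OccursAt v (c :: w) i ↔ v i = c ∧ OccursAt v w (i + 1) := by
  rw [OccursAt, List.length_cons, factorAt_succ', List.cons.injEq]
  rfl

lemma IsFactor.exists_append_singleton (hw : IsFactor v w) : ∃ c, IsFactor v (w ++ [c]) := by
  obtain ⟨i, hi⟩ := hw
  exact ⟨v (i + w.length), i, occursAt_append.2 ⟨hi, rfl⟩⟩

lemma rightSpecial_factorAt {i j : ℕ} (h : factorAt v i n = factorAt v j n)
    (hne : v (i + n) ≠ v (j + n)) : RightSpecial v (factorAt v i n) := by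
  refine ⟨v (i + n), v (j + n), hne, ?_, ?_⟩
  · exact factorAt_succ v i n ▸ isFactor_factorAt v i (n + 1)
  · rw [h]
    exact factorAt_succ v j n ▸ isFactor_factorAt v j (n + 1)

lemma RightSpecial.isFactor (hw : RightSpecial v w) : IsFactor v w := by
  obtain ⟨_, _, -, ⟨i, hi⟩, -⟩ := hw
  exact ⟨i, (occursAt_append.1 hi).1⟩

lemma RightSpecial.of_cons {c : α} (hw : RightSpecial v (c :: w)) : RightSpecial v w := by
  obtain ⟨a, b, hab, ⟨i, hi⟩, ⟨j, hj⟩⟩ := hw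
  exact ⟨a, b, hab, ⟨i + 1, (occursAt_cons.1 hi).2⟩, ⟨j + 1, (occursAt_cons.1 hj).2⟩⟩

/-- The factors of `v` of length `n`; their number is `complexity v n`. -/
def factorsOfLength (v : ℕ → α) (n : ℕ) : Set (List α) :=
  {u | IsFactor v u ∧ u.length = n}

lemma factorAt_mem_factorsOfLength (v : ℕ → α) (i n : ℕ) :
    factorAt v i n ∈ factorsOfLength v n :=
  ⟨isFactor_factorAt v i n, length_factorAt v i n⟩

lemma finite_factorsOfLength [Finite α] (v : ℕ → α) (n : ℕ) : (factorsOfLength v n).Finite :=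
  (List.finite_length_eq α n).subset fun _ hu => hu.2

lemma dropLast_mem_factorsOfLength (hw : w ∈ factorsOfLength v (n + 1)) :
    w.dropLast ∈ factorsOfLength v n := by
  obtain ⟨⟨i, hi⟩, hn⟩ := hw
  rw [hn] at hi
  subst hi
  rw [factorAt_succ, List.dropLast_concat]
  exact factorAt_mem_factorsOfLength v i n

lemma exists_rightSpecial [Finite α] (h : complexity v n < complexity v (n + 1)) :
    ∃ w, w.length = n ∧ RightSpecial v w := by
  obtain ⟨x, ⟨⟨i, hi⟩, hx⟩, y, ⟨⟨j, hj⟩, hy⟩, hne, heq⟩ :=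
    Set.exists_ne_map_eq_of_ncard_lt_of_maps_to h
      (fun _ => dropLast_mem_factorsOfLength) (finite_factorsOfLength v n)
  rw [hx] at hi
  rw [hy] at hj
  subst hi hj
  simp only [factorAt_succ, List.dropLast_concat] at heq hne
  refine ⟨factorAt v i n, length_factorAt v i n, rightSpecial_factorAt heq fun hlast => hne ?_⟩
  rw [heq, hlast]

lemma RightSpecial.eq_of_complexity_succ_le [Finite α] (hw : RightSpecial v w)
    (hw' : RightSpecial v w') (hlen : w'.length = w.length)
    (h : complexity v (w.length + 1) ≤ complexity v w.length + 1) : w = w' := by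
  by_contra hww'
  obtain ⟨a, b, hab, ha, hb⟩ := hw
  obtain ⟨a', b', hab', ha', hb'⟩ := hw'
  set n := w.length with hn
  set S := factorsOfLength v (n + 1)
  set R : Set (List α) := {w ++ [a], w' ++ [a']}
  have hRS : R ⊆ S := by
    rintro _ (rfl | rfl)
    · exact ⟨ha, by simp [hn]⟩
    · exact ⟨ha', by simp [hlen]⟩
  have hS : S.Finite := finite_factorsOfLength v (n + 1)
  -- Even after removing one extension of `w` and one of `w'`, every factor can be extended.
  have hcover : factorsOfLength v n ⊆ List.dropLast '' (S \ R) := by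
    rintro z ⟨hz, hzn⟩
    obtain ⟨c, hc, hcR⟩ : ∃ c, IsFactor v (z ++ [c]) ∧ z ++ [c] ∉ R := by
      by_cases hzw : z = w
      · exact ⟨b, hzw ▸ hb, by simp [R, hzw, hww', hab.symm]⟩
      by_cases hzw' : z = w'
      · exact ⟨b', hzw' ▸ hb', by simp [R, hzw', Ne.symm hww', hab'.symm]⟩
      obtain ⟨c, hc⟩ := hz.exists_append_singleton
      exact ⟨c, hc, by simp [R, hzw, hzw']⟩
    exact ⟨z ++ [c], ⟨⟨hc, by simp [hzn]⟩, hcR⟩, List.dropLast_concat⟩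
  have hR : R.ncard = 2 := Set.ncard_pair (by simp [hww'])
  have hSR : (S \ R).ncard + R.ncard = S.ncard := Set.ncard_sdiff_add_ncard_of_subset hRS hS
  have hle : (factorsOfLength v n).ncard ≤ (S \ R).ncard :=
    (Set.ncard_le_ncard hcover (hS.sdiff.image _)).trans (Set.ncard_image_le hS.sdiff)
  have hcard : S.ncard ≤ (factorsOfLength v n).ncard + 1 := h
  lia

end Factors

/-! ### Right special factors of Sturmian sequences -/

section Sturmian

variable {u : ℕ → Bool} {w w' : List Bool}

lemma apply_add_mod_eq_of_deterministic {x : ℕ → α} {s d : ℕ} (hd : 0 < d)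
    (hstep : ∀ k < d, ∀ l, x (s + k) = x l → x (s + k + 1) = x (l + 1))
    (hreturn : x (s + d) = x s) (k : ℕ) : x (s + k % d) = x (s + k) := by
  induction k with
  | zero => simp
  | succ k ih =>
    have hlt := Nat.mod_lt k hd
    have hnext := hstep (k % d) hlt (s + k) ih
    rw [add_assoc s k 1, add_assoc] at hnext
    rcases (Nat.succ_le_of_lt hlt).lt_or_eq with hlt' | heq
    · rwa [← Nat.mod_add_mod, Nat.mod_eq_of_lt hlt']
    · rw [← Nat.mod_add_mod, ← hnext, ← Nat.succ_eq_add_one, heq, Nat.mod_self, add_zero, hreturn]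

lemma eventuallyPeriodic_of_deterministic_window {v : ℕ → α} {n s d : ℕ} (hd : 0 < d)
    (hdet : ∀ k < d, ∀ l, factorAt v (s + k) n = factorAt v l n → v (s + k + n) = v (l + n))
    (hreturn : factorAt v (s + d) n = factorAt v s n) : EventuallyPeriodic v := by
  have hstep : ∀ k < d, ∀ l, factorAt v (s + k) n = factorAt v l n →
      factorAt v (s + k + 1) n = factorAt v (l + 1) n := by
    intro k hk l hkl
    have hlong : factorAt v (s + k) (n + 1) = factorAt v l (n + 1) := by
      rw [factorAt_succ, factorAt_succ, hkl, hdet k hk l hkl]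
    rw [factorAt_succ', factorAt_succ'] at hlong
    exact (List.cons.inj hlong).2
  have hletter (k : ℕ) : v (s + k % d + n) = v (s + k + n) :=
    hdet _ (Nat.mod_lt k hd) _
      (apply_add_mod_eq_of_deterministic (x := fun i => factorAt v i n) hd hstep hreturn k)
  refine ⟨d, hd, s + n, fun m hm => ?_⟩
  obtain ⟨k, rfl⟩ := Nat.exists_eq_add_of_le hm
  have hshift := hletter (k + d)
  rw [Nat.add_mod_right, hletter k] at hshift
  rw [show s + n + k + d = s + (k + d) + n by ring, ← hshift, add_right_comm]

lemma Sturmian.exists_rightSpecial (hu : Sturmian u) (n : ℕ) :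
    ∃ w, w.length = n ∧ RightSpecial u w :=
  BalancedCE.exists_rightSpecial (by rw [hu.2, hu.2]; exact Nat.lt_succ_self _)

lemma Sturmian.eq_of_rightSpecial (hu : Sturmian u) (hw : RightSpecial u w)
    (hw' : RightSpecial u w') (hlen : w'.length = w.length) : w = w' :=
  hw.eq_of_complexity_succ_le hw' hlen (by rw [hu.2, hu.2])

lemma Sturmian.exists_occursAt_of_rightSpecial (hu : Sturmian u) (hw : RightSpecial u w) (p : ℕ) :
    ∃ k ≤ w.length, OccursAt u w (p + k) := by
  by_contra! hcon
  set n := w.length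
  have hmem : w ∈ factorsOfLength u n := ⟨hw.isFactor, rfl⟩
  have hcard : (factorsOfLength u n).ncard = n + 1 := hu.2 n
  obtain ⟨s, hs, t, ht, hst, heq⟩ : ∃ s ∈ Set.Iic n, ∃ t ∈ Set.Iic n, s ≠ t ∧
      factorAt u (p + s) n = factorAt u (p + t) n := by
    refine Set.exists_ne_map_eq_of_ncard_lt_of_maps_to (t := factorsOfLength u n \ {w}) ?_
      (fun k hk => ⟨factorAt_mem_factorsOfLength u (p + k) n, hcon k hk⟩)
      (finite_factorsOfLength u n).sdiff
    rw [Set.ncard_sdiff_singleton_of_mem hmem, hcard, ← Finset.coe_Iic, Set.ncard_coe_finset,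
      Nat.card_Iic]
    lia
  wlog hlt : s < t generalizing s t
  · exact this t ht s hs hst.symm heq.symm (by lia)
  refine hu.1 (eventuallyPeriodic_of_deterministic_window (s := p + s) (d := t - s) (n := n)
    (by lia) (fun k hk l hkl => ?_) ?_)
  · by_contra hne
    refine hcon (s + k) (by rw [Set.mem_Iic] at ht; lia) ?_
    rw [← add_assoc]
    exact (hu.eq_of_rightSpecial hw (rightSpecial_factorAt hkl hne) (length_factorAt ..)).symm
  · rw [heq, add_assoc, Nat.add_sub_cancel' hlt.le]

end Sturmian

/-! ### Sturmian sequences are balanced -/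

section Balance

variable [DecidableEq α] {v : ℕ → α} {c : α} {n i j k : ℕ}

/-- The number of occurrences of the letter `c` in the factor of `v` of length `n` starting at
position `i`. -/
def letterCount (v : ℕ → α) (c : α) (i n : ℕ) : ℕ := (factorAt v i n).count c

lemma letterCount_zero (v : ℕ → α) (c : α) (i : ℕ) : letterCount v c i 0 = 0 := rfl

lemma letterCount_one (v : ℕ → α) (c : α) (i : ℕ) :
    letterCount v c i 1 = if v i = c then 1 else 0 := by
  simp [letterCount, List.count_singleton]

lemma letterCount_add (v : ℕ → α) (c : α) (i m n : ℕ) :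
    letterCount v c i (m + n) = letterCount v c i m + letterCount v c (i + m) n := by
  rw [letterCount, factorAt_add, List.count_append, letterCount, letterCount]

lemma letterCount_eq_add (v : ℕ → α) (c : α) (i : ℕ) (hk : k ≤ n) :
    letterCount v c i n = letterCount v c i k + letterCount v c (i + k) (n - k) := by
  rw [← letterCount_add, Nat.add_sub_cancel' hk]

lemma balanced_iff :
    Balanced v ↔ ∀ c n i j, letterCount v c i n ≤ letterCount v c j n + 1 := by
  refine ⟨fun h c n i j => ?_, fun h c x y hx hy hlen => ?_⟩
  · have hij := abs_le.1 (h c _ _ (isFactor_factorAt v i n) (isFactor_factorAt v j n) (by simp))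
    unfold letterCount
    lia
  · obtain ⟨i, hi⟩ := hx
    obtain ⟨j, hj⟩ := hy
    have hij := h c x.length i j
    have hji := h c x.length j i
    unfold letterCount at hij hji
    rw [hi, hlen, hj] at hij
    rw [hi, hlen, hj] at hji
    rw [abs_le]
    lia

/-- The factors of length `n` at the positions `i` and `j` witness that `v` is not balanced, the
first having too many letters `c`, and `n` is the smallest length at which this happens for `c`. -/
structure IsMinimalImbalance (v : ℕ → α) (c : α) (n i j : ℕ) : Prop where
  lt : letterCount v c j n + 1 < letterCount v c i n
  le_of_lt : ∀ k < n, ∀ x y, letterCount v c x k ≤ letterCount v c y k + 1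

lemma exists_isMinimalImbalance (h : ¬Balanced v) : ∃ c n i j, IsMinimalImbalance v c n i j := by
  rw [balanced_iff] at h
  push Not at h
  obtain ⟨c, hc⟩ := h
  classical
  obtain ⟨i, j, hij⟩ := Nat.find_spec hc
  refine ⟨c, Nat.find hc, i, j, hij, fun k hk x y => ?_⟩
  have hmin := Nat.find_min hc hk
  push Not at hmin
  exact hmin x y

namespace IsMinimalImbalance

lemma one_lt (h : IsMinimalImbalance v c n i j) : 1 < n := by
  have hlt := h.lt
  by_contra! hn
  interval_cases n
  · simp only [letterCount_zero] at hlt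
    lia
  · simp only [letterCount_one] at hlt
    split_ifs at hlt <;> lia

lemma prefix_eq (h : IsMinimalImbalance v c n i j) (hk : 0 < k) (hkn : k < n) :
    letterCount v c i k = letterCount v c j k + 1 := by
  have hlt := h.lt
  rw [letterCount_eq_add v c i hkn.le, letterCount_eq_add v c j hkn.le] at hlt
  have hpre := h.le_of_lt k hkn i j
  have hsuf := h.le_of_lt (n - k) (by lia) (i + k) (j + k)
  lia

lemma suffix_eq (h : IsMinimalImbalance v c n i j) (hk : 0 < k) (hkn : k < n) :
    letterCount v c (i + (n - k)) k = letterCount v c (j + (n - k)) k + 1 := by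
  have hlt := h.lt
  rw [letterCount_eq_add v c i (Nat.sub_le n k), letterCount_eq_add v c j (Nat.sub_le n k),
    Nat.sub_sub_self hkn.le] at hlt
  have hpre := h.prefix_eq (k := n - k) (by lia) (by lia)
  have hsuf := h.le_of_lt k hkn (i + (n - k)) (j + (n - k))
  lia

lemma apply_left (h : IsMinimalImbalance v c n i j) : v i = c ∧ v j ≠ c := by
  have hone := h.prefix_eq one_pos h.one_lt
  simp only [letterCount_one] at hone
  split_ifs at hone <;> lia

lemma letterCount_prefix_eq_suffix (h : IsMinimalImbalance v c n i j) (hk : k ≤ n) :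
    letterCount v c i k = letterCount v c (i + (n - k)) k ∧
      letterCount v c j k = letterCount v c (j + (n - k)) k := by
  rcases Nat.eq_zero_or_pos k with rfl | hk0
  · simp only [letterCount_zero, and_self]
  rcases hk.eq_or_lt with rfl | hkn
  · simp only [Nat.sub_self, add_zero, and_self]
  have hpre := h.prefix_eq hk0 hkn
  have hsuf := h.suffix_eq hk0 hkn
  have hij := h.le_of_lt k hkn i (j + (n - k))
  have hji := h.le_of_lt k hkn (i + (n - k)) j
  lia

lemma apply_middle (h : IsMinimalImbalance v c n i j) (hk : 0 < k) (hkn : k + 1 < n) :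
    v (i + k) = c ↔ v (j + k) = c := by
  have hpre := h.prefix_eq hk (by lia)
  have hpre' := h.prefix_eq (k := k + 1) k.succ_pos hkn
  rw [letterCount_add, letterCount_add, letterCount_one, letterCount_one] at hpre'
  split_ifs at hpre' <;> lia

end IsMinimalImbalance

lemma apply_eq_iff_of_letterCount_prefix_eq_suffix
    (h : ∀ k ≤ n, letterCount v c i k = letterCount v c (i + (n - k)) k) (hk : k < n) :
    v (i + k) = c ↔ v (i + (n - 1 - k)) = c := by
  have hshort := h k hk.le
  have hlong := h (k + 1) hk
  rw [letterCount_add v c i k 1, add_comm k 1, letterCount_add v c _ 1 k, letterCount_one,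
    letterCount_one, ← Nat.sub_sub, add_assoc i, show n - 1 - k + 1 = n - k by lia] at hlong
  split_ifs at hlong <;> lia

end Balance

section SturmianBalanced

variable {u : ℕ → Bool} {n p q : ℕ}

lemma Sturmian.not_rightSpecial_of_palindrome (hu : Sturmian u) (hne : u p ≠ u q)
    (hmid : factorAt u (p + 1) n = factorAt u (q + 1) n)
    (hpal : ∀ k ≤ n + 1, u (p + k) = u (p + (n + 1 - k))) :
    ¬RightSpecial u (factorAt u q (n + 1)) := by
  intro hrs
  obtain ⟨k, hk, hocc⟩ := hu.exists_occursAt_of_rightSpecial hrs p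
  rw [length_factorAt] at hk
  rw [OccursAt, length_factorAt, factorAt_congr_iff] at hocc
  have hfirst : u (p + k) = u q := hocc 0 n.succ_pos
  have hlast : u (p + (n + 1)) = u p := (hpal 0 (Nat.zero_le _)).symm
  have hk0 : k ≠ 0 := fun h => hne (by rw [← hfirst, h, add_zero])
  have hkn : k ≠ n + 1 := fun h => hne (by rw [← hfirst, h, hlast])
  apply hne
  calc u p = u (p + k + (n + 1 - k)) := by rw [← hlast]; congr 1; lia
    _ = u (q + 1 + (n - k)) := by rw [hocc (n + 1 - k) (by lia)]; congr 1; lia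
    _ = u (p + 1 + (n - k)) := (factorAt_congr_iff.1 hmid (n - k) (by lia)).symm
    _ = u (p + k) := by rw [hpal k hk]; congr 1; lia
    _ = u q := hfirst

theorem Sturmian.balanced (hu : Sturmian u) : Balanced u := by
  -- A minimal imbalance consists of palindromes `c z c` and `d z d` with `z` right special, so one
  -- of `c z` and `d z` is right special as well, although neither can be.
  by_contra hcon
  obtain ⟨c, n, i, j, h⟩ := exists_isMinimalImbalance hcon
  obtain ⟨n, rfl⟩ := Nat.exists_eq_add_of_le' h.one_lt
  have eq_of_iff {x y : Bool} (hxy : x = c ↔ y = c) : x = y := by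
    revert hxy; cases x <;> cases y <;> cases c <;> decide
  have hmid : factorAt u (i + 1) n = factorAt u (j + 1) n := factorAt_congr_iff.2 fun k hk => by
    rw [add_assoc, add_assoc, add_comm 1]
    exact eq_of_iff (h.apply_middle k.succ_pos (by lia))
  have hpali : ∀ k ≤ n + 1, u (i + k) = u (i + (n + 1 - k)) := fun k hk =>
    eq_of_iff (apply_eq_iff_of_letterCount_prefix_eq_suffix
      (fun _ hk => (h.letterCount_prefix_eq_suffix hk).1) (by lia))
  have hpalj : ∀ k ≤ n + 1, u (j + k) = u (j + (n + 1 - k)) := fun k hk =>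
    eq_of_iff (apply_eq_iff_of_letterCount_prefix_eq_suffix
      (fun _ hk => (h.letterCount_prefix_eq_suffix hk).2) (by lia))
  have hne : u i ≠ u j := fun heq => h.apply_left.2 (heq ▸ h.apply_left.1)
  have hends : u (i + 1 + n) ≠ u (j + 1 + n) := by
    have hlasti : u i = u (i + (n + 1)) := hpali 0 (Nat.zero_le _)
    have hlastj : u j = u (j + (n + 1)) := hpalj 0 (Nat.zero_le _)
    rwa [add_assoc, add_assoc, add_comm 1, ← hlasti, ← hlastj]
  obtain ⟨_ | ⟨z, zs⟩, hlen, hrs⟩ := hu.exists_rightSpecial (n + 1)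
  · simp at hlen
  have hzs : zs = factorAt u (i + 1) n :=
    hu.eq_of_rightSpecial hrs.of_cons (rightSpecial_factorAt hmid hends)
      (by rw [length_factorAt]; simpa using hlen.symm)
  obtain rfl | rfl : z = u i ∨ z = u j := by
    revert hne; cases z <;> cases u i <;> cases u j <;> decide
  · rw [hzs, ← factorAt_succ'] at hrs
    exact hu.not_rightSpecial_of_palindrome hne.symm hmid.symm hpalj hrs
  · rw [hzs, hmid, ← factorAt_succ'] at hrs
    exact hu.not_rightSpecial_of_palindrome hne hmid hpali hrs

end SturmianBalanced

/-! ### Frequencies and discrepancy -/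

section Discrepancy

variable [DecidableEq α] {v : ℕ → α} {c d : α} {ρ : ℝ} {w : List α} {i j : ℕ}

lemma HasFreq.mul_mem_Icc (hρ : HasFreq v c ρ) {n : ℕ} {lo hi : ℝ}
    (h : ∀ i, (letterCount v c i n : ℝ) ∈ Set.Icc lo hi) : n * ρ ∈ Set.Icc lo hi := by
  have hblocks (K : ℕ) : (letterCount v c 0 (K * n) : ℝ) ∈ Set.Icc (K * lo) (K * hi) := by
    induction K with
    | zero => simp [letterCount_zero]
    | succ K ih =>
      rw [add_one_mul K n, letterCount_add, zero_add, Set.mem_Icc]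
      have hblock := h (K * n)
      push_cast
      constructor <;> linarith [ih.1, ih.2, hblock.1, hblock.2]
  rcases Nat.eq_zero_or_pos n with rfl | hn
  · simpa [letterCount_zero] using h 0
  have hlim : Tendsto (fun K : ℕ => n * ((letterCount v c 0 (K * n) : ℝ) / (K * n : ℕ)))
      atTop (nhds (n * ρ)) :=
    (hρ.comp (tendsto_id.atTop_mul_const' hn)).const_mul (n : ℝ)
  refine isClosed_Icc.mem_of_tendsto hlim ?_
  filter_upwards [eventually_gt_atTop 0] with K hK
  have hK' : (0 : ℝ) < K := Nat.cast_pos.2 hK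
  have hn' : (n : ℝ) ≠ 0 := Nat.cast_ne_zero.2 hn.ne'
  rw [Nat.cast_mul, mul_comm (K : ℝ), mul_div, mul_div_mul_left _ _ hn', Set.mem_Icc,
    le_div_iff₀' hK', div_le_iff₀' hK']
  exact hblocks K

lemma Balanced.abs_letterCount_sub_mul_le (hv : Balanced v) (hρ : HasFreq v c ρ) (i n : ℕ) :
    |(letterCount v c i n : ℝ) - n * ρ| ≤ 1 := by
  have hmem := hρ.mul_mem_Icc (n := n) (lo := letterCount v c i n - 1)
    (hi := letterCount v c i n + 1) fun k => by
      have hik : (letterCount v c i n : ℝ) ≤ letterCount v c k n + 1 := by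
        exact_mod_cast balanced_iff.1 hv c n i k
      have hki : (letterCount v c k n : ℝ) ≤ letterCount v c i n + 1 := by
        exact_mod_cast balanced_iff.1 hv c n k i
      constructor <;> linarith
  rw [abs_le]
  constructor <;> linarith [hmem.1, hmem.2]

/-- The discrepancy of the prefix of `v` of length `p`: the difference between the actual number of
letters `c` and the number `p * ρ` expected from their frequency `ρ`. -/
noncomputable def discrepancy (v : ℕ → α) (c : α) (ρ : ℝ) (p : ℕ) : ℝ :=
  letterCount v c 0 p - p * ρ

lemma discrepancy_add (v : ℕ → α) (c : α) (ρ : ℝ) (p n : ℕ) :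
    discrepancy v c ρ (p + n) = discrepancy v c ρ p + (letterCount v c p n - n * ρ) := by
  rw [discrepancy, discrepancy, letterCount_add, zero_add]
  push_cast
  ring

lemma Balanced.abs_discrepancy_sub_le (hv : Balanced v) (hρ : HasFreq v c ρ) (p q : ℕ) :
    |discrepancy v c ρ p - discrepancy v c ρ q| ≤ 1 := by
  wlog hqp : q ≤ p generalizing p q
  · rw [abs_sub_comm]
    exact this q p (le_of_not_ge hqp)
  obtain ⟨n, rfl⟩ := Nat.exists_eq_add_of_le hqp
  rw [discrepancy_add, add_sub_cancel_left]
  exact hv.abs_letterCount_sub_mul_le hρ q n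

lemma letterCount_eq_count_take (hi : OccursAt v w i) {k : ℕ} (hk : k ≤ w.length) :
    letterCount v c i k = (w.take k).count c := by
  rw [letterCount, ← hi, ← Nat.add_sub_cancel' hk, factorAt_add, List.take_left' (by simp)]

lemma Balanced.mul_mem_Icc_count_take (hv : Balanced v) (hρ : HasFreq v c ρ) (hdc : d ≠ c)
    (hc : IsFactor v (c :: w)) (hd : IsFactor v (d :: w)) {k : ℕ} (hk : k ≤ w.length) :
    (k + 1) * ρ ∈ Set.Icc ((w.take k).count c : ℝ) ((w.take k).count c + 1) := by
  obtain ⟨p, hp⟩ := hc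
  obtain ⟨q, hq⟩ := hd
  obtain ⟨hpc, hpw⟩ := occursAt_cons.1 hp
  obtain ⟨hqd, hqw⟩ := occursAt_cons.1 hq
  have hcountp : letterCount v c p (1 + k) = (w.take k).count c + 1 := by
    rw [letterCount_add, letterCount_one, if_pos hpc, letterCount_eq_count_take hpw hk, add_comm]
  have hcountq : letterCount v c q (1 + k) = (w.take k).count c := by
    rw [letterCount_add, letterCount_one, if_neg (hqd ▸ hdc), letterCount_eq_count_take hqw hk,
      zero_add]
  have hmem := hρ.mul_mem_Icc (n := 1 + k) (lo := (w.take k).count c)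
    (hi := (w.take k).count c + 1) fun x => by
      have hpx := balanced_iff.1 hv c (1 + k) p x
      have hxq := balanced_iff.1 hv c (1 + k) x q
      rw [hcountp] at hpx
      rw [hcountq] at hxq
      exact ⟨by exact_mod_cast (by lia : _ ≤ _), by exact_mod_cast hxq⟩
  rwa [Nat.cast_add, Nat.cast_one, add_comm (1 : ℝ)] at hmem

/-- `η` is at most the length of the gap around `0` left in the circle `ℝ / ℤ` by the points
`ρ, 2ρ, …, (n + 1)ρ`: no such point is closer to `0` from the right, and none closer from the left,
than two distances adding up to `η`. -/
def IsGapBound (ρ : ℝ) (n : ℕ) (η : ℝ) : Prop :=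
  ∀ r s p q : ℕ, r ∈ Set.Icc 1 (n + 1) → s ∈ Set.Icc 1 (n + 1) → p < r * ρ → s * ρ < q →
    η ≤ (r * ρ - p) + (q - s * ρ)

theorem Balanced.isGapBound (hv : Balanced v) (hρ : HasFreq v c ρ) (hdc : d ≠ c)
    (hc : IsFactor v (c :: w)) (hd : IsFactor v (d :: w)) (hi : OccursAt v w i)
    (hj : OccursAt v w j) :
    IsGapBound ρ w.length |discrepancy v c ρ j - discrepancy v c ρ i| := by
  rintro r s p q ⟨hr, hr'⟩ ⟨hs, hs'⟩ hp hq
  obtain ⟨k, rfl⟩ := Nat.exists_eq_add_of_le' hr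
  obtain ⟨l, rfl⟩ := Nat.exists_eq_add_of_le' hs
  rw [add_le_add_iff_right] at hr' hs'
  have hk := hv.mul_mem_Icc_count_take hρ hdc hc hd hr'
  have hl := hv.mul_mem_Icc_count_take hρ hdc hc hd hs'
  push_cast at hp hq ⊢
  have hpk : (p : ℝ) ≤ (w.take k).count c := by
    exact_mod_cast Nat.lt_add_one_iff.1 (by exact_mod_cast hp.trans_le hk.2)
  have hql : ((w.take l).count c : ℝ) + 1 ≤ q := by
    exact_mod_cast Nat.succ_le_of_lt (by exact_mod_cast hl.1.trans_lt hq)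
  have hjk := abs_le.1 (hv.abs_discrepancy_sub_le hρ (j + k) (i + l))
  have hik := abs_le.1 (hv.abs_discrepancy_sub_le hρ (i + k) (j + l))
  simp only [discrepancy_add, letterCount_eq_count_take hi hr', letterCount_eq_count_take hi hs',
    letterCount_eq_count_take hj hr', letterCount_eq_count_take hj hs'] at hjk hik
  rw [abs_le]
  constructor <;> linarith [hjk.2, hik.2]

end Discrepancy

/-! ### Convergents of `[0; 2, m, 1, 1, 1, …]` -/

section Convergents

open scoped goldenRatio

variable {m n l : ℕ}

/-- The number `[0; 2, m, 1, 1, 1, …]`, written with the tail `-ψ = φ⁻¹ = [0; 1, 1, 1, …]`. It is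
the frequency of the rarer letter in a Sturmian sequence of slope `[0; 1, m, 1, 1, 1, …]`. -/
noncomputable def goldenFreq (m : ℕ) : ℝ := (m - ψ) / (2 * (m - ψ) + 1)

/-- The distance from `2 * goldenFreq m` to `1`, in terms of which all the approximation errors of
the convergents of `goldenFreq m` are expressed. -/
noncomputable def goldenDist (m : ℕ) : ℝ := (2 * (m - ψ) + 1)⁻¹

/-- The denominator of the `l`-th convergent of `goldenFreq m`, starting from the convergent
`1 / 2`. -/
def convDen (m : ℕ) : ℕ → ℕ
  | 0 => 2
  | 1 => 2 * m + 1
  | l + 2 => convDen m (l + 1) + convDen m l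

/-- The numerator of the `l`-th convergent of `goldenFreq m`, starting from the convergent
`1 / 2`. -/
def convNum (m : ℕ) : ℕ → ℕ
  | 0 => 1
  | 1 => m
  | l + 2 => convNum m (l + 1) + convNum m l

lemma two_mul_sub_goldenConj_add_one_pos (m : ℕ) : 0 < 2 * (m - ψ) + 1 := by
  linarith [Real.goldenConj_neg, m.cast_nonneg (α := ℝ)]

lemma goldenDist_pos (m : ℕ) : 0 < goldenDist m :=
  inv_pos.2 (two_mul_sub_goldenConj_add_one_pos m)

lemma goldenFreq_eq_mul_goldenDist (m : ℕ) : goldenFreq m = (m - ψ) * goldenDist m :=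
  div_eq_mul_inv _ _

lemma one_sub_two_mul_goldenFreq (m : ℕ) : 1 - 2 * goldenFreq m = goldenDist m := by
  have hpos := two_mul_sub_goldenConj_add_one_pos m
  rw [goldenFreq, goldenDist, ← one_div, eq_div_iff hpos.ne', sub_mul, mul_assoc,
    div_mul_cancel₀ _ hpos.ne']
  ring

lemma convDen_mul_goldenFreq_sub_convNum (m : ℕ) :
    ∀ l, convDen m l * goldenFreq m - convNum m l = -(ψ ^ l * goldenDist m)
  | 0 => by
    rw [convDen, convNum]
    push_cast
    linear_combination -one_sub_two_mul_goldenFreq m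
  | 1 => by
    rw [convDen, convNum]
    push_cast
    linear_combination goldenFreq_eq_mul_goldenDist m - m * one_sub_two_mul_goldenFreq m
  | l + 2 => by
    rw [convDen, convNum]
    push_cast
    linear_combination convDen_mul_goldenFreq_sub_convNum m (l + 1) +
      convDen_mul_goldenFreq_sub_convNum m l + ψ ^ l * goldenDist m * Real.goldenConj_sq

lemma convDen_pos (m : ℕ) : ∀ l, 0 < convDen m l
  | 0 => two_pos
  | 1 => Nat.succ_pos _
  | l + 2 => Nat.add_pos_left (convDen_pos m (l + 1)) _

lemma strictMono_convDen (hm : 1 ≤ m) : StrictMono (convDen m) := by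
  refine strictMono_nat_of_lt_succ fun l => ?_
  rcases l with _ | l
  · rw [convDen, convDen]
    lia
  · exact Nat.lt_add_of_pos_right (convDen_pos m l)

lemma exists_int_combination_conv (m l : ℕ) (P A : ℤ) :
    ∃ s t : ℤ, P = s * convDen m l + t * convDen m (l + 1) ∧
      A = s * convNum m l + t * convNum m (l + 1) := by
  induction l with
  | zero =>
    refine ⟨A - m * (P - 2 * A), P - 2 * A, ?_, ?_⟩ <;> simp only [convDen, convNum] <;>
      push_cast <;> ring
  | succ l ih =>
    obtain ⟨s, t, rfl, rfl⟩ := ih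
    refine ⟨t - s, s, ?_, ?_⟩ <;> simp only [convDen, convNum] <;> push_cast <;> ring

theorem convDen_succ_le_of_abs_sub_lt {P : ℕ} {A : ℤ} (hP : 0 < P)
    (h : |A - P * goldenFreq m| < |ψ| ^ l * goldenDist m) : convDen m (l + 1) ≤ P := by
  obtain ⟨s, t, hPst, hAst⟩ := exists_int_combination_conv m l P A
  have hst : |s + t * ψ| < 1 := by
    have herror : A - P * goldenFreq m = ψ ^ l * goldenDist m * (s + t * ψ) := by
      have hP' : (P : ℝ) = s * convDen m l + t * convDen m (l + 1) := by exact_mod_cast hPst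
      rw [hP', hAst]
      push_cast
      linear_combination -s * convDen_mul_goldenFreq_sub_convNum m l -
        t * convDen_mul_goldenFreq_sub_convNum m (l + 1)
    rw [herror, abs_mul, abs_mul, abs_pow, abs_of_pos (goldenDist_pos m)] at h
    have hpos : 0 < |ψ| ^ l * goldenDist m :=
      mul_pos (pow_pos (abs_pos.2 Real.goldenConj_ne_zero) l) (goldenDist_pos m)
    exact (mul_lt_iff_lt_one_right hpos).1 h
  obtain ⟨hlo, hhi⟩ := abs_lt.1 hst
  have hψ := Real.goldenConj_neg
  have hQ : (0 : ℤ) < convDen m l := by exact_mod_cast convDen_pos m l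
  have hQ' : (0 : ℤ) < convDen m (l + 1) := by exact_mod_cast convDen_pos m (l + 1)
  zify
  -- As `ψ < 0`, the coefficients `s` and `t` cannot have opposite signs.
  rcases lt_trichotomy t 0 with ht | rfl | ht
  · have hψt : 0 < t * ψ := mul_pos_of_neg_of_neg (Int.cast_lt_zero.2 ht) hψ
    have hs : s < 1 := by exact_mod_cast (by linarith : (s : ℝ) < 1)
    nlinarith [hQ, hQ']
  · rw [Int.cast_zero, zero_mul, add_zero] at hlo hhi
    have hs : -1 < s := by exact_mod_cast hlo
    have hs' : s < 1 := by exact_mod_cast hhi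
    obtain rfl : s = 0 := by lia
    lia
  · have hψt : t * ψ < 0 := mul_neg_of_pos_of_neg (Int.cast_pos.2 ht) hψ
    have hs : -1 < s := by exact_mod_cast (by linarith : (-1 : ℝ) < s)
    nlinarith [hQ, hQ']

lemma convDen_succ_le_of_mul_abs_sub_le {P : ℕ} {A : ℤ} (hP : 0 < P) {δ κ : ℝ} (hδ : 0 < δ)
    (h : δ * |A - P * goldenFreq m| ≤ κ * goldenDist m) (hκ : κ < δ * |ψ| ^ l) :
    convDen m (l + 1) ≤ P := by
  refine convDen_succ_le_of_abs_sub_lt (A := A) hP (lt_of_mul_lt_mul_left ?_ hδ.le)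
  rw [← mul_assoc]
  exact h.trans_lt (mul_lt_mul_of_pos_right hκ (goldenDist_pos m))

end Convergents

/-! ### Gap bounds for `[0; 2, m, 1, 1, 1, …]` -/

section GapBound

open scoped goldenRatio

variable {m n l : ℕ} {δ η : ℝ}

lemma IsGapBound.le_of_convDen_le (h : IsGapBound (goldenFreq m) n η) (hm : 1 ≤ m)
    (hl : convDen m (l + 1) ≤ n + 1) : η ≤ |ψ| ^ l * φ * goldenDist m := by
  have hψ := Real.goldenConj_neg
  have hQl := convDen_mul_goldenFreq_sub_convNum m l
  have hQl' := convDen_mul_goldenFreq_sub_convNum m (l + 1)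
  have hmem : convDen m l ∈ Set.Icc 1 (n + 1) :=
    ⟨convDen_pos m l, (strictMono_convDen hm l.lt_succ_self).le.trans hl⟩
  have hmem' : convDen m (l + 1) ∈ Set.Icc 1 (n + 1) := ⟨convDen_pos m (l + 1), hl⟩
  rw [pow_succ, mul_right_comm] at hQl'
  have habs : |ψ| ^ l * goldenDist m = |ψ ^ l * goldenDist m| := by
    rw [abs_mul, abs_pow, abs_of_pos (goldenDist_pos m)]
  rw [mul_right_comm, habs, ← Real.one_sub_goldenRatio]
  set x := ψ ^ l * goldenDist m
  -- The errors `-x` and `-x * ψ` have opposite signs: the convergents lie on either side.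
  have hx0 : x ≠ 0 := mul_ne_zero (pow_ne_zero l Real.goldenConj_ne_zero) (goldenDist_pos m).ne'
  rcases hx0.lt_or_gt with hneg | hpos
  · rw [abs_of_neg hneg]
    have hxψ : 0 < x * ψ := mul_pos_of_neg_of_neg hneg hψ
    linarith [h _ _ (convNum m l) (convNum m (l + 1)) hmem hmem' (by linarith) (by linarith)]
  · rw [abs_of_pos hpos]
    have hxψ : x * ψ < 0 := mul_neg_of_pos_of_neg hpos hψ
    linarith [h _ _ (convNum m (l + 1)) (convNum m l) hmem' hmem (by linarith) (by linarith)]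

lemma IsGapBound.le_of_two_mul_le (h : IsGapBound (goldenFreq m) n η) (hn : 1 ≤ n) {j : ℕ}
    (hjn : 2 * j ≤ n) (hjm : j ≤ m) : η ≤ (m - ψ - j + 1) * goldenDist m := by
  have hψ := Real.goldenConj_neg
  have hε := goldenDist_pos m
  have hjm' : (j : ℝ) ≤ m := Nat.cast_le.2 hjm
  have hupper : (2 : ℕ) * goldenFreq m < (1 : ℕ) := by
    push_cast
    linarith [one_sub_two_mul_goldenFreq m]
  have herror : (2 * j + 1 : ℕ) * goldenFreq m - j = (m - ψ - j) * goldenDist m := by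
    push_cast
    linear_combination goldenFreq_eq_mul_goldenDist m - j * one_sub_two_mul_goldenFreq m
  have hlower : j < (2 * j + 1 : ℕ) * goldenFreq m := by
    rw [← sub_pos, herror]
    exact mul_pos (by linarith) hε
  have hgap := h (2 * j + 1) 2 j 1 ⟨by lia, by lia⟩ ⟨by lia, by lia⟩ hlower hupper
  push_cast at hgap herror
  linarith [one_sub_two_mul_goldenFreq m]

lemma goldenConj_mem_Ioo : ψ ∈ Set.Ioo (-0.6181 : ℝ) (-0.618) := by
  have hψ := Real.goldenConj_neg
  have hsq := Real.goldenConj_sq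
  constructor <;> nlinarith

variable {P : ℕ} {A : ℤ}

lemma two_mul_le_of_two_mul_le_of_isGapBound (hm : 1 ≤ m) (hδ : 7 ≤ δ) (hP : 0 < P)
    (hmn : 2 * m ≤ n) (h : IsGapBound (goldenFreq m) n (δ * |A - P * goldenFreq m|)) :
    2 * n ≤ P := by
  have hmono := strictMono_convDen hm
  obtain ⟨l, hl, hl'⟩ : ∃ l, convDen m (l + 1) < n + 2 ∧ n + 2 ≤ convDen m (l + 2) :=
    (hmono.comp (strictMono_id.add_const 1)).exists_between_of_tendsto_atTop
      ((hmono.comp (strictMono_id.add_const 1)).tendsto_atTop)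
      (by simp only [Function.comp_apply, id, convDen]; lia)
  have hpow : |ψ| ^ l * φ < δ * |ψ| ^ (l + 3) := by
    have hpos : 0 < |ψ| ^ l := pow_pos (abs_pos.2 Real.goldenConj_ne_zero) l
    obtain ⟨hlo, hhi⟩ := goldenConj_mem_Ioo
    have hcube : |ψ| ^ 3 = -2 * ψ - 1 := by
      rw [abs_of_neg Real.goldenConj_neg]
      linear_combination (-ψ - 1) * Real.goldenConj_sq
    rw [pow_add, hcube, mul_left_comm, ← Real.one_sub_goldenRatio]
    refine mul_lt_mul_of_pos_left ?_ hpos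
    nlinarith
  have hQ : convDen m (l + 4) ≤ P :=
    convDen_succ_le_of_mul_abs_sub_le hP (by linarith)
      (h.le_of_convDen_le hm (Nat.lt_succ_iff.1 hl)) hpow
  have hQ3 := hmono (l + 2).lt_succ_self
  rw [convDen] at hQ
  lia

lemma two_mul_le_of_lt_two_mul_of_isGapBound (hm : 3 ≤ m) (hδ : 7 ≤ δ) (hmδ : 2 * m ≤ δ)
    (hP : 0 < P) (hn : 1 ≤ n) (hnm : n < 2 * m)
    (h : IsGapBound (goldenFreq m) n (δ * |A - P * goldenFreq m|)) : 2 * n ≤ P := by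
  obtain ⟨hlo, hhi⟩ := goldenConj_mem_Ioo
  have hm' : (3 : ℝ) ≤ m := by exact_mod_cast hm
  have hδ0 : 0 < δ := by linarith
  have hgap := h.le_of_two_mul_le hn (Nat.mul_div_le n 2) (by lia)
  rcases (by lia : n ≤ m ∨ n = m + 1 ∨ m + 2 ≤ n) with hle | heq | hge
  · have hj : (0 : ℝ) ≤ (n / 2 : ℕ) := Nat.cast_nonneg _
    have hQ1 : convDen m 1 ≤ P :=
      convDen_succ_le_of_mul_abs_sub_le hP hδ0 hgap (by rw [pow_zero]; linarith [hj])
    rw [convDen] at hQ1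
    lia
  · have hj : (m : ℝ) ≤ 2 * (n / 2 : ℕ) := by exact_mod_cast (by lia : m ≤ 2 * (n / 2))
    have hQ2 : convDen m 2 ≤ P := convDen_succ_le_of_mul_abs_sub_le hP hδ0 hgap (by
      rw [pow_one, abs_of_neg Real.goldenConj_neg]
      nlinarith)
    simp only [convDen] at hQ2
    lia
  · have hj : (m : ℝ) + 1 ≤ 2 * (n / 2 : ℕ) := by
      exact_mod_cast (by lia : m + 1 ≤ 2 * (n / 2))
    have hQ3 : convDen m 3 ≤ P := convDen_succ_le_of_mul_abs_sub_le hP hδ0 hgap (by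
      rw [sq_abs, Real.goldenConj_sq]
      rcases (by lia : m = 3 ∨ m = 4 ∨ 5 ≤ m) with rfl | rfl | hm5
      · have hj2 : (2 : ℝ) ≤ (n / 2 : ℕ) := by exact_mod_cast (by lia : 2 ≤ n / 2)
        push_cast
        nlinarith [hj2]
      · have hj3 : (3 : ℝ) ≤ (n / 2 : ℕ) := by exact_mod_cast (by lia : 3 ≤ n / 2)
        push_cast at hmδ ⊢
        nlinarith
      · have hm5' : (5 : ℝ) ≤ m := by exact_mod_cast hm5
        nlinarith)
    simp only [convDen] at hQ3
    lia

theorem two_mul_le_of_isGapBound (hm : 3 ≤ m) (hδ : 7 ≤ δ) (hmδ : 2 * m ≤ δ) (hP : 0 < P)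
    (hn : 1 ≤ n) (h : IsGapBound (goldenFreq m) n (δ * |A - P * goldenFreq m|)) : 2 * n ≤ P :=
  (le_or_gt (2 * m) n).elim
    (fun hmn => two_mul_le_of_two_mul_le_of_isGapBound (by lia) hδ hP hmn h)
    (fun hnm => two_mul_le_of_lt_two_mul_of_isGapBound hm hδ hmδ hP hn hnm h)

end GapBound

/-! ### Slopes with an eventually golden continued fraction -/

section Slope

open scoped goldenRatio

variable {u : ℕ → Bool} {θ : ℝ} {a : ℕ → ℕ}

lemma HasCF.mem_Ioo (h : HasCF θ a) : θ ∈ Set.Ioo 0 1 := by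
  obtain ⟨t, rfl, ht⟩ := h
  exact ⟨(ht 0).1, (ht 0).2.1⟩

lemma HasCF.exists_tail (h : HasCF θ a) :
    ∃ θ', HasCF θ' (fun n => a (n + 1)) ∧ θ * (a 1 + θ') = 1 := by
  obtain ⟨t, rfl, ht⟩ := h
  refine ⟨t 1, ⟨fun n => t (n + 1), rfl, fun n => ht (n + 1)⟩, ?_⟩
  rw [← zero_add 1, ← (ht 0).2.2, mul_one_div_cancel (ht 0).1.ne']

lemma HasCF.abs_add_goldenConj_le (k : ℕ) :
    ∀ {θ : ℝ} {a : ℕ → ℕ}, HasCF θ a → (∀ n, 1 ≤ n → a n = 1) → |θ + ψ| ≤ |ψ| ^ k := by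
  induction k with
  | zero =>
    intro θ a h _
    rw [pow_zero, abs_le]
    constructor <;>
      linarith [h.mem_Ioo.1, h.mem_Ioo.2, Real.goldenConj_neg, Real.neg_one_lt_goldenConj]
  | succ k ih =>
    intro θ a h ha
    obtain ⟨θ', hθ', hmul⟩ := h.exists_tail
    rw [ha 1 le_rfl, Nat.cast_one] at hmul
    have hpos := hθ'.mem_Ioo.1
    have hcontract : (θ + ψ) * (1 + θ') = ψ * (θ' + ψ) := by
      linear_combination hmul - Real.goldenConj_sq
    calc |θ + ψ| ≤ |θ + ψ| * (1 + θ') :=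
          le_mul_of_one_le_right (abs_nonneg _) (by linarith)
      _ = |ψ| * |θ' + ψ| := by
          rw [← abs_mul, ← hcontract, abs_mul, abs_of_pos (by linarith : 0 < 1 + θ')]
      _ ≤ |ψ| * |ψ| ^ k :=
          mul_le_mul_of_nonneg_left (ih hθ' fun n _ => ha (n + 1) n.succ_pos) (abs_nonneg _)
      _ = |ψ| ^ (k + 1) := (pow_succ' _ _).symm

lemma HasCF.eq_neg_goldenConj (h : HasCF θ a) (ha : ∀ n, 1 ≤ n → a n = 1) : θ = -ψ := by
  have hψ : |ψ| < 1 := abs_lt.2 ⟨Real.neg_one_lt_goldenConj, by linarith [Real.goldenConj_neg]⟩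
  have hle : |θ + ψ| ≤ 0 := ge_of_tendsto'
    (tendsto_pow_atTop_nhds_zero_of_lt_one (abs_nonneg _) hψ) fun k => h.abs_add_goldenConj_le k ha
  exact eq_neg_of_add_eq_zero_left (abs_nonpos_iff.1 hle)

lemma letterCount_false_add_letterCount_true (u : ℕ → Bool) (i n : ℕ) :
    letterCount u false i n + letterCount u true i n = n := by
  rw [letterCount, letterCount, List.count_false_add_count_true, length_factorAt]

lemma HasFreq.add_eq_one {ρ ρ' : ℝ} (hρ : HasFreq u false ρ) (hρ' : HasFreq u true ρ') :
    ρ + ρ' = 1 := by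
  refine tendsto_nhds_unique (hρ.add hρ') (tendsto_const_nhds.congr' ?_)
  filter_upwards [eventually_ne_atTop 0] with n hn
  rw [← add_div, ← Nat.cast_add]
  exact (div_self (Nat.cast_ne_zero.2 hn)).symm.trans
    (by rw [← letterCount, ← letterCount, letterCount_false_add_letterCount_true])

lemma HasSlope.hasFreq_false (h : HasSlope u θ) : HasFreq u false (θ / (1 + θ)) := by
  obtain ⟨ρ, ρ', hρ, hρ', hlt, rfl⟩ := h
  have hsum := hρ.add_eq_one hρ'
  have hpos : 0 < ρ' := by linarith
  have heq : ρ / ρ' / (1 + ρ / ρ') = ρ := by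
    rw [one_add_div hpos.ne', add_comm ρ', hsum, div_div_div_cancel_right₀ hpos.ne', div_one]
  rwa [heq]

theorem HasSlope.hasFreq_goldenFreq (hθ : HasSlope u θ) (hcf : HasCF θ a) (ha1 : a 1 = 1)
    (ha : ∀ n, 3 ≤ n → a n = 1) : HasFreq u false (goldenFreq (a 2)) := by
  obtain ⟨θ₁, hcf₁, hmul⟩ := hcf.exists_tail
  obtain ⟨θ₂, hcf₂, hmul₁⟩ := hcf₁.exists_tail
  have hθ₂ : θ₂ = -ψ := hcf₂.eq_neg_goldenConj fun n hn => ha (n + 2) (by lia)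
  rw [ha1, Nat.cast_one] at hmul
  rw [one_add_one_eq_two, hθ₂, ← sub_eq_add_neg] at hmul₁
  have hpos := hcf.mem_Ioo.1
  have hdenom := two_mul_sub_goldenConj_add_one_pos (a 2)
  have heq : θ / (1 + θ) = goldenFreq (a 2) := by
    rw [goldenFreq, div_eq_div_iff (by linarith) hdenom.ne']
    linear_combination (a 2 - ψ) * hmul - θ * hmul₁
  exact heq ▸ hθ.hasFreq_false

end Slope

/-! ### Cyclic colourings -/

section Colouring

variable {δ : ℕ} {u : ℕ → Bool} {w : List (ZMod δ ⊕ ZMod δ)} {i j : ℕ} {c : Bool}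

lemma countBefore_eq_letterCount (u : ℕ → Bool) (c : Bool) (n : ℕ) :
    countBefore u c n = letterCount u c 0 n := by
  rw [countBefore, letterCount, factorAt, List.count_eq_countP, List.countP_map,
    List.countP_eq_length_filter]
  simp [Function.comp_def, beq_eq_decide]

lemma proj_comp_colourCyc (δ : ℕ) (u : ℕ → Bool) : proj ∘ colourCyc δ u = u := by
  funext p
  cases hp : u p <;> simp [colourCyc, colour, proj, hp]

lemma colourCyc_eq_iff {p q : ℕ} (hp : u p = c) (hq : u q = c) :
    colourCyc δ u p = colourCyc δ u q ↔
      (letterCount u c 0 p : ZMod δ) = letterCount u c 0 q := by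
  cases c <;> simp [colourCyc, colour, cyc, hp, hq, countBefore_eq_letterCount]

lemma OccursAt.map_proj (hi : OccursAt (colourCyc δ u) w i) : OccursAt u (w.map proj) i := by
  simpa only [proj_comp_colourCyc] using hi.map proj

lemma OccursAt.letterCount_cast_eq (hi : OccursAt (colourCyc δ u) w i)
    (hj : OccursAt (colourCyc δ u) w j) (hc : c ∈ w.map proj) :
    (letterCount u c 0 i : ZMod δ) = letterCount u c 0 j := by
  obtain ⟨x, hx, rfl⟩ := List.mem_map.1 hc
  obtain ⟨s, t, rfl⟩ := List.append_of_mem hx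
  obtain ⟨his, hix⟩ := occursAt_append.1 hi
  obtain ⟨hjs, hjx⟩ := occursAt_append.1 hj
  have hcolour := (occursAt_cons.1 hix).1.trans (occursAt_cons.1 hjx).1.symm
  rw [colourCyc_eq_iff (occursAt_cons.1 hix.map_proj).1 (occursAt_cons.1 hjx.map_proj).1,
    letterCount_add, letterCount_add, zero_add, zero_add] at hcolour
  rw [← List.length_map proj, letterCount_eq_count_take his.map_proj le_rfl,
    letterCount_eq_count_take hjs.map_proj le_rfl] at hcolour
  push_cast at hcolour
  exact add_right_cancel hcolour

theorem LeftSpecial.map_proj (hw : LeftSpecial (colourCyc δ u) w)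
    (hπ : ∀ c, c ∈ w.map proj) : LeftSpecial u (w.map proj) := by
  obtain ⟨x, y, hxy, ⟨p, (hp : OccursAt _ _ p)⟩, ⟨q, (hq : OccursAt _ _ q)⟩⟩ := hw
  refine ⟨proj x, proj y, fun heq => hxy ?_, ⟨p, hp.map_proj⟩, ⟨q, hq.map_proj⟩⟩
  have hqp : u q = u p := (occursAt_cons.1 hq.map_proj).1.trans
    (heq.symm.trans (occursAt_cons.1 hp.map_proj).1.symm)
  obtain ⟨rfl, hpw⟩ := occursAt_cons.1 hp
  obtain ⟨rfl, hqw⟩ := occursAt_cons.1 hq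
  have hcount := hpw.letterCount_cast_eq hqw (hπ (u p))
  rw [letterCount_add, letterCount_add, letterCount_one, letterCount_one, zero_add, zero_add,
    if_pos rfl, if_pos hqp] at hcount
  push_cast at hcount
  exact (colourCyc_eq_iff rfl hqp).2 (add_right_cancel hcount)

lemma LeftSpecial.isFactor_cons {w : List Bool} (hw : LeftSpecial u w) (c : Bool) :
    IsFactor u (c :: w) := by
  obtain ⟨a, b, hab, ha, hb⟩ := hw
  rcases Bool.eq_or_eq_not c a with rfl | rfl
  · exact ha
  · rwa [Bool.not_eq.2 hab]

lemma OccursAt.dvd_letterCount (hi : OccursAt (colourCyc δ u) w i)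
    (hj : OccursAt (colourCyc δ u) w j) (hc : c ∈ w.map proj) (hij : i ≤ j) :
    δ ∣ letterCount u c i (j - i) := by
  have hcount := hi.letterCount_cast_eq hj hc
  rwa [letterCount_eq_add u c 0 hij, zero_add, Nat.cast_add, left_eq_add,
    ZMod.natCast_eq_zero_iff] at hcount

theorem OccursAt.exists_gap_eq_mul (hi : OccursAt (colourCyc δ u) w i)
    (hj : OccursAt (colourCyc δ u) w j) (hπ : ∀ c, c ∈ w.map proj) (hij : i ≤ j) (ρ : ℝ) :
    ∃ (P : ℕ) (A : ℤ), j - i = δ * P ∧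
      |discrepancy u false ρ j - discrepancy u false ρ i| = δ * |A - P * ρ| := by
  obtain ⟨A, hA⟩ := hi.dvd_letterCount hj (hπ false) hij
  obtain ⟨B, hB⟩ := hi.dvd_letterCount hj (hπ true) hij
  have hgap : j - i = δ * (A + B) := by
    rw [← letterCount_false_add_letterCount_true u i (j - i), hA, hB, mul_add]
  refine ⟨A + B, A, hgap, ?_⟩
  have hincrement : discrepancy u false ρ j - discrepancy u false ρ i =
      δ * (A - (A + B : ℕ) * ρ) := by
    rw [← Nat.add_sub_cancel' hij, discrepancy_add, add_sub_cancel_left, hA, hgap]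
    push_cast
    ring
  rw [hincrement, abs_mul, Nat.abs_cast, Int.cast_natCast]

end Colouring

theorem two_mul_length_le_gap {δ m : ℕ} (hm : 3 ≤ m) (hδ : 7 ≤ δ) (hmδ : 2 * m ≤ δ)
    {u : ℕ → Bool} (hu : Sturmian u) (hρ : HasFreq u false (goldenFreq m))
    {w : List (ZMod δ ⊕ ZMod δ)} (hw : LeftSpecial (colourCyc δ u) w)
    (hπ : ∀ c, c ∈ w.map proj) {i j : ℕ} (hij : i < j) (hi : OccursAt (colourCyc δ u) w i)
    (hj : OccursAt (colourCyc δ u) w j) : 2 * δ * w.length ≤ j - i := by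
  have hπw := hw.map_proj hπ
  obtain ⟨P, A, hgap, hdisc⟩ := hi.exists_gap_eq_mul hj hπ hij.le (goldenFreq m)
  have hbound := hu.balanced.isGapBound hρ (by decide : true ≠ false)
    (hπw.isFactor_cons false) (hπw.isFactor_cons true) hi.map_proj hj.map_proj
  rw [hdisc, List.length_map] at hbound
  have hP : 0 < P := Nat.pos_of_mul_pos_left (hgap ▸ Nat.sub_pos_of_lt hij)
  have hw0 : 1 ≤ w.length := List.length_map proj ▸ List.length_pos_of_mem (hπ true)
  have hle := two_mul_le_of_isGapBound hm (by exact_mod_cast hδ) (by exact_mod_cast hmδ) hP hw0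
    hbound
  calc 2 * δ * w.length = δ * (2 * w.length) := by ring
    _ ≤ δ * P := Nat.mul_le_mul_left δ hle
    _ = j - i := hgap.symm

theorem statement14_general {δ : ℕ} (hδ : 7 ≤ δ) {u : ℕ → Bool} (hu : Sturmian u) {θ : ℝ}
    (hθ : HasSlope u θ) {a : ℕ → ℕ} (hcf : HasCF θ a) (ha1 : a 1 = 1) (ha2 : 3 ≤ a 2)
    (ha2δ : 2 * a 2 ≤ δ) (ha : ∀ n, 3 ≤ n → a n = 1) {w : List (ZMod δ ⊕ ZMod δ)}
    (hw : LeftSpecial (colourCyc δ u) w) (hπa : false ∈ w.map proj) (hπb : true ∈ w.map proj)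
    {i j : ℕ} (hij : i < j) (hi : OccursAt (colourCyc δ u) w i)
    (hj : OccursAt (colourCyc δ u) w j) :
    (w.length : ℝ) / ((j - i : ℕ) : ℝ) ≤ 1 / (2 * δ) := by
  have hle := two_mul_length_le_gap ha2 hδ ha2δ hu (hθ.hasFreq_goldenFreq hcf ha1 ha) hw
    (Bool.forall_bool.2 ⟨hπa, hπb⟩) hij hi hj
  rw [div_le_div_iff₀ (Nat.cast_pos.2 (Nat.sub_pos_of_lt hij)) (by positivity), one_mul, mul_comm]
  exact_mod_cast hle

theorem statement14 (δ : ℕ) (hδ : 7 ≤ δ) (u : ℕ → Bool) (hu : IsStandard u)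
    (θ : ℝ) (hθ : HasSlope u θ) (a : ℕ → ℕ) (hcf : HasCF θ a)
    (ha1 : a 1 = 1) (ha2 : a 2 = δ / 2) (ha : ∀ n, 3 ≤ n → a n = 1)
    (w : List (ZMod δ ⊕ ZMod δ)) (hw : Bispecial (colourCyc δ u) w)
    (hπa : false ∈ w.map proj) (hπb : true ∈ w.map proj)
    (v : List (ZMod δ ⊕ ZMod δ)) (hv : IsReturnWord (colourCyc δ u) w v) :
    (w.length : ℝ) / (v.length : ℝ) < 1 / (2 * (δ : ℝ) - 2) := by
  obtain ⟨i, j, hij, hi, hj, -, rfl⟩ := hv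
  have hδ' : (7 : ℝ) ≤ δ := by exact_mod_cast hδ
  rw [length_factorAt]
  calc (w.length : ℝ) / ((j - i : ℕ) : ℝ) ≤ 1 / (2 * δ) :=
        statement14_general hδ hu.1 hθ hcf ha1 (by lia) (by lia) ha hw.1 hπa hπb hij hi hj
    _ < 1 / (2 * δ - 2) := one_div_lt_one_div_of_lt (by linarith) (by linarith)

end BalancedCE
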